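/- Let B be a unital algebra and G_B^I = {f ∈ Mult[[B]] : f_0 = 0, f_1 ∈ GL(B), f_1(1) invertible, and f_n(x_1, x_2, …, x_n) = x_1 f_n(1, x_2, …, x_n) for all n ≥ 1}. Then G_B^I is a group under composition ∘ of multilinear function series. In particular if f = I·F and g = I·G with F, G having invertible constant term, then f ∘ g = I·(G · (F ∘ (I·G))) and f^{∘−1} = I · (F ∘ f^{∘−1})^{−1}. -/

import Mathlib

universe u

/-- A (formal) series of `n`-ary functions on `B` (the carrier of `Mult[[B]]`). -/
def MSeries (B : Type u) : Type u := ∀ n : ℕ, (Fin n → B) → B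

namespace MSeries

variable {B : Type u} [Ring B]

/-- The multiplication `(f · g)_n(x₁,…,xₙ) = ∑ₖ f_k(x₁,…,x_k) g_{n-k}(x_{k+1},…,xₙ)`. -/
def mul (f g : MSeries B) : MSeries B := fun n x =>
  ∑ k : Fin (n + 1),
    f k.1 (fun i => x (Fin.castLE (Nat.lt_succ_iff.mp k.isLt) i)) *
      g (n - k.1) (fun i => x ⟨k.1 + i.1, by have h1 := k.isLt; have h2 := i.isLt; omega⟩)

/-- The composition `(f ∘ g)_n(x₁,…,xₙ)
  = ∑_{n = k₁ + ⋯ + k_l, kᵢ ≥ 1} f_l(g_{k₁}(x₁,…), …, g_{k_l}(…,xₙ))`. -/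
def comp (f g : MSeries B) : MSeries B := fun n x =>
  ∑ c : Composition n,
    f c.length (fun i => g (c.blocksFun i) (fun j => x (c.embedding i j)))

/-- The compositional identity `I = (δ_{n,1} Id)`. -/
def idS : MSeries B := fun n =>
  match n with
  | 1 => fun x => x 0
  | _ => fun _ => 0

/-- The multiplicative unit `1 = (δ_{n,0} 1)`. -/
def oneS : MSeries B := fun n _ => if n = 0 then 1 else 0

end MSeries

/-- `f` is a series of `K`-multilinear functions, i.e. `f ∈ Mult[[B]]`. -/
def IsMultSeries (K : Type u) [Field K] {B : Type u} [Ring B] [Algebra K B]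
    (f : MSeries B) : Prop :=
  ∀ n, ∃ F : MultilinearMap K (fun _ : Fin n => B) B, ∀ x, f n x = F x

/-- Membership in `G_B^I = I · G_B^{inv}`: `f₀ = 0`, `f₁ ∈ GL(B)`, `f₁(1) ∈ B^×` and
`f_n(x₁, x₂, …, xₙ) = x₁ · f_n(1, x₂, …, xₙ)` for all `n ≥ 1`. -/
def memGI (K : Type u) [Field K] {B : Type u} [Ring B] [Algebra K B]
    (f : MSeries B) : Prop :=
  IsMultSeries K f ∧
  (∀ x : Fin 0 → B, f 0 x = 0) ∧
  Function.Bijective (fun b : B => f 1 fun _ => b) ∧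
  IsUnit (f 1 fun _ => 1) ∧
  ∀ (n : ℕ) (x : Fin (n + 1) → B), f (n + 1) x = x 0 * f (n + 1) (Function.update x 0 1)

set_option linter.unusedSectionVars false

namespace MSeries

section helpers
variable {B : Type u} [Ring B]

theorem congr_arity (p : MSeries B) {m n : ℕ} {v : Fin m → B} {w : Fin n → B} (h : m = n)
    (hv : ∀ (i : ℕ) (hm : i < m) (hn : i < n), v ⟨i, hm⟩ = w ⟨i, hn⟩) : p m v = p n w := by
  subst h
  congr 1
  funext i
  exact hv i.1 i.2 i.2

/-- Evaluation of a series on a list. -/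
def ev (f : MSeries B) (l : List B) : B := f l.length l.get

theorem ev_ofFn (f : MSeries B) {n : ℕ} (x : Fin n → B) : ev f (List.ofFn x) = f n x :=
  congr_arity f (by simp) (by intro i h1 h2; simp)

theorem ext_ev {f g : MSeries B} (h : ∀ l, ev f l = ev g l) : f = g := by
  funext n x
  rw [← ev_ofFn f, ← ev_ofFn g, h]

theorem ev_nil (f : MSeries B) (x : Fin 0 → B) : ev f [] = f 0 x :=
  congr_arity f rfl (by intro i h1; omega)

/-- Convolution of functions on lists. -/
def cv (f g : List B → B) : List B → B
  | [] => f [] * g []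
  | a :: l => f [] * g (a :: l) + cv (fun l' => f (a :: l')) g l

theorem cv_eq_sum (f g : List B → B) (l : List B) :
    cv f g l = ∑ k ∈ Finset.range (l.length + 1), f (l.take k) * g (l.drop k) := by
  induction l generalizing f with
  | nil => simp [cv]
  | cons a l ih =>
    rw [cv, ih, List.length_cons, Finset.sum_range_succ' _ (l.length + 1), add_comm]
    simp

theorem cv_add (f f' g : List B → B) (l : List B) :
    cv (fun l => f l + f' l) g l = cv f g l + cv f' g l := by
  simp only [cv_eq_sum, add_mul, Finset.sum_add_distrib]

theorem cv_smul (c : B) (f g : List B → B) (l : List B) :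
    cv (fun l => c * f l) g l = c * cv f g l := by
  simp only [cv_eq_sum, mul_assoc, Finset.mul_sum]

theorem cv_zero (g : List B → B) (l : List B) : cv (fun _ => 0) g l = 0 := by
  simp [cv_eq_sum]

theorem cv_assoc (f g h : List B → B) (l : List B) :
    cv (cv f g) h l = cv f (cv g h) l := by
  induction l generalizing f with
  | nil => simp [cv, mul_assoc]
  | cons a l ih =>
    have : (fun l' => cv f g (a :: l')) =
        fun l' => f [] * g (a :: l') + cv (fun l' => f (a :: l')) g l' := by
      funext l'; rw [cv]
    rw [cv, this, cv_add, cv_smul, ih, cv, cv, cv, mul_add, mul_assoc, add_assoc]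

theorem cv_split (P : List B → List B → B) (G : List B → B) (l : List B) :
    cv (fun l' => ∑ k ∈ Finset.range (l'.length + 1), P (l'.take k) (l'.drop k)) G l =
      ∑ k ∈ Finset.range (l.length + 1), cv (P (l.take k)) G (l.drop k) := by
  induction l generalizing P with
  | nil => simp [cv]
  | cons a l ih =>
    have : (fun l' : List B => ∑ k ∈ Finset.range ((a :: l').length + 1),
          P ((a :: l').take k) ((a :: l').drop k)) =
        fun l' => P [] (a :: l') + ∑ k ∈ Finset.range (l'.length + 1),
          P (a :: l'.take k) (l'.drop k) := by
      funext l'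
      rw [List.length_cons, Finset.sum_range_succ' _ (l'.length + 1), add_comm]
      simp
    rw [cv, this, cv_add, ih (fun u v => P (a :: u) v), List.length_cons,
      Finset.sum_range_succ' _ (l.length + 1), add_comm (∑ k ∈ _, _)]
    simp [cv, add_assoc]

theorem ev_mul (f g : MSeries B) (l : List B) : ev (f.mul g) l = cv (ev f) (ev g) l := by
  rw [cv_eq_sum, ← Fin.sum_univ_eq_sum_range (fun k => ev f (l.take k) * ev g (l.drop k))]
  unfold ev mul
  refine Finset.sum_congr rfl fun k _ => ?_
  have hk := k.2
  congr 1
  · apply congr_arity f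
    · simp; omega
    · intro i h1 h2
      simp
  · apply congr_arity g
    · simp
    · intro i h1 h2
      simp

theorem mul_assoc' (f g h : MSeries B) : (f.mul g).mul h = f.mul (g.mul h) := by
  apply ext_ev
  intro l
  rw [ev_mul, ev_mul, show ev (f.mul g) = cv (ev f) (ev g) from funext (ev_mul f g),
    show ev (g.mul h) = cv (ev g) (ev h) from funext (ev_mul g h), cv_assoc]

theorem ev_oneS_nil : ev (oneS : MSeries B) [] = 1 := by simp [ev, oneS]
theorem ev_oneS_cons (a : B) (l : List B) : ev (oneS : MSeries B) (a :: l) = 0 := by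
  simp [ev, oneS]

theorem cv_single (a : B) (f g : List B → B) (h0 : f [] = a) (h : ∀ b l, f (b :: l) = 0)
    (l : List B) : cv f g l = a * g l := by
  cases l with
  | nil => simp [cv, h0]
  | cons b l =>
    rw [cv, h0, show (fun l' => f (b :: l')) = fun _ => 0 from funext (h b), cv_zero, add_zero]

theorem one_mul' (f : MSeries B) : oneS.mul f = f := by
  apply ext_ev
  intro l
  rw [ev_mul, cv_single 1 _ _ ev_oneS_nil ev_oneS_cons, one_mul]

theorem mul_one' (f : MSeries B) : f.mul oneS = f := by
  apply ext_ev
  intro l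
  rw [ev_mul]
  generalize ev f = F
  induction l generalizing F with
  | nil => simp [cv, ev_oneS_nil]
  | cons a l ih => rw [cv, ih, ev_oneS_cons, mul_zero, zero_add]

theorem idS_of_ne {n : ℕ} (h : n ≠ 1) (x : Fin n → B) : idS n x = 0 := by
  unfold idS
  split
  · exact absurd rfl h
  · rfl

theorem idS_of_eq {n : ℕ} (h : n = 1) (x : Fin n → B) : idS n x = x ⟨0, by omega⟩ := by
  subst h; rfl

theorem idS_mul_zero (F : MSeries B) (x : Fin 0 → B) : (idS.mul F) 0 x = 0 := by
  rw [← ev_nil (idS.mul F), ev_mul, cv, ev, idS_of_ne (by simp), zero_mul]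

theorem idS_mul_succ (F : MSeries B) {n : ℕ} (x : Fin (n + 1) → B) :
    (idS.mul F) (n + 1) x = x 0 * F n (Fin.tail x) := by
  rw [← ev_ofFn (idS.mul F), List.ofFn_succ, ev_mul, cv, ev, idS_of_ne (by simp), zero_mul, zero_add,
    cv_single (x 0), ← ev_ofFn F]
  · rfl
  · exact idS_of_eq (by simp) _
  · intro b l
    exact idS_of_ne (by simp) _

/-- Fix the first argument. -/
def shift (f : MSeries B) (b : B) : MSeries B := fun n x => f (n + 1) (Fin.cons b x)

theorem ev_shift (f : MSeries B) (b : B) (l : List B) : ev (shift f b) l = ev f (b :: l) := by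
  apply congr_arity f (by simp)
  intro i h1 h2
  cases i with
  | zero => rfl
  | succ i => rfl

theorem ev_comp (f g : MSeries B) (l : List B) : ev (f.comp g) l =
    ∑ c : Composition l.length, ev f ((l.splitWrtComposition c).map (ev g)) := by
  rw [ev, comp]
  refine Finset.sum_congr rfl fun c _ => ?_
  apply congr_arity f (by simp)
  intro i h1 h2
  simp only [List.get_eq_getElem, List.getElem_map, List.getElem_splitWrtComposition]
  have h3 := c.sizeUpTo_le (i + 1)
  have h4 : c.sizeUpTo (i + 1) = c.sizeUpTo i + c.blocksFun ⟨i, h1⟩ := c.sizeUpTo_succ' ⟨i, h1⟩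
  apply congr_arity g
  · simp; omega
  · intro j h1 h2
    simp [Composition.coe_embedding]

theorem sum_composition_succ (n : ℕ) (φ : List ℕ → B) :
    ∑ c : Composition (n + 1), φ c.blocks =
      ∑ k ∈ Finset.range (n + 1), ∑ c : Composition (n - k), φ ((k + 1) :: c.blocks) := by
  rw [Finset.sum_sigma']
  symm
  refine Finset.sum_bij (fun s hs => (⟨(s.1 + 1) :: s.2.blocks, ?_, ?_⟩ : Composition (n + 1)))
    ?_ ?_ ?_ ?_
  · intro i hi
    rcases List.mem_cons.1 hi with h | h
    · omega
    · exact s.2.blocks_pos h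
  · have := Finset.mem_range.1 (Finset.mem_sigma.1 hs).1
    rw [List.sum_cons, s.2.blocks_sum]; omega
  · intro _ _; exact Finset.mem_univ _
  · rintro ⟨k, c⟩ h1 ⟨k', c'⟩ h2 h
    have h3 := congrArg Composition.blocks h
    simp only [List.cons.injEq, add_left_inj] at h3
    obtain ⟨rfl, h4⟩ := h3
    rw [Composition.ext h4]
  · rintro ⟨bl, hp, hs⟩ _
    cases bl with
    | nil => simp at hs
    | cons k bl =>
      have hk : 0 < k := hp (by simp)
      rw [List.sum_cons] at hs
      obtain ⟨k, rfl⟩ : ∃ j, k = j + 1 := ⟨k - 1, by omega⟩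
      refine ⟨⟨k, ⟨bl, fun h => hp (List.mem_cons_of_mem _ h), by omega⟩⟩, ?_, rfl⟩
      simp; omega
  · intro _ _; rfl

theorem ev_comp_cons (f g : MSeries B) (a : B) (l : List B) : ev (f.comp g) (a :: l) =
    ∑ k ∈ Finset.range (l.length + 1),
      ev ((shift f (ev g (a :: l.take k))).comp g) (l.drop k) := by
  rw [ev_comp]
  unfold List.splitWrtComposition
  refine (sum_composition_succ l.length
    (fun bl => ev f (((a :: l).splitWrtCompositionAux bl).map (ev g)))).trans ?_
  refine Finset.sum_congr rfl fun k _ => ?_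
  rw [ev_comp]
  have key : ∀ (m : ℕ) (h : m = l.length - k),
    ∑ c : Composition (l.length - k), ev f (((a :: l).splitWrtCompositionAux
      ((k + 1) :: c.blocks)).map (ev g)) =
    ∑ c : Composition m, ev (shift f (ev g (a :: l.take k)))
      (((l.drop k).splitWrtComposition c).map (ev g)) := by
    rintro m rfl
    refine Finset.sum_congr rfl fun c _ => ?_
    rw [ev_shift, List.splitWrtCompositionAux_cons]
    rfl
  exact key _ (by simp)

theorem ev_comp_nil (f g : MSeries B) : ev (f.comp g) [] = ev f [] := by
  rw [ev_comp]
  change ∑ c : Composition 0, _ = _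
  rw [Finset.sum_eq_single (Composition.ones 0)]
  · rfl
  · intro c _ hc
    exfalso
    apply hc
    apply Composition.ext
    have h1 : c.blocks.length ≤ 0 := c.length_le
    rw [List.length_eq_zero_iff.1 (Nat.le_zero.1 h1)]
    rfl
  · simp

theorem comp_lin (F A C h : MSeries B) (c : B) (H : ∀ l, ev F l = c * ev A l + ev C l)
    (l : List B) : ev (F.comp h) l = c * ev (A.comp h) l + ev (C.comp h) l := by
  simp only [ev_comp, H, Finset.sum_add_distrib, Finset.mul_sum]

theorem mul_comp (f g h : MSeries B) : (f.mul g).comp h = (f.comp h).mul (g.comp h) := by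
  apply ext_ev
  intro l
  rw [ev_mul]
  induction hn : l.length using Nat.strong_induction_on generalizing f l with
  | _ n ih =>
  cases l with
  | nil => rw [ev_comp_nil, ev_mul, cv, cv, ev_comp_nil, ev_comp_nil]
  | cons a l =>
    rw [ev_comp_cons, cv, ev_comp_nil]
    have h1 : ∀ k ∈ Finset.range (l.length + 1),
        ev ((shift (f.mul g) (ev h (a :: l.take k))).comp h) (l.drop k) =
        ev f [] * ev ((shift g (ev h (a :: l.take k))).comp h) (l.drop k) +
        cv (ev ((shift f (ev h (a :: l.take k))).comp h)) (ev (g.comp h)) (l.drop k) := by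
      intro k _
      rw [comp_lin _ (shift g (ev h (a :: l.take k)))
        ((shift f (ev h (a :: l.take k))).mul g) h (ev f [])]
      · rw [ih (l.drop k).length (by simp at hn ⊢; omega) _ _ rfl]
      · intro l'
        rw [ev_shift, ev_shift, ev_mul, ev_mul, cv]
        simp only [show ev (shift f (ev h (a :: l.take k))) =
          fun l' => ev f (ev h (a :: l.take k) :: l') from funext (ev_shift _ _)]
    rw [Finset.sum_congr rfl h1, Finset.sum_add_distrib, ← Finset.mul_sum, ← ev_comp_cons]
    simp only [ev_comp_cons f h]
    rw [cv_split (fun u v => ev ((shift f (ev h (a :: u))).comp h) v)]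

theorem id_comp' (p : MSeries B) (h0 : ∀ x, p 0 x = 0) : idS.comp p = p := by
  funext n v
  obtain rfl | n_pos := n.eq_zero_or_pos
  · rw [← ev_nil (idS.comp p), ev_comp_nil, h0]
    exact idS_of_ne (by simp) _
  · rw [comp, Finset.sum_eq_single (Composition.single n n_pos)]
    · rw [idS_of_eq (Composition.single_length n_pos)]
      refine congr_arity p rfl fun i him hin => congr_arg v <| ?_
      exact Composition.single_embedding n_pos ⟨i, hin⟩
    · intro b _ hb
      exact idS_of_ne (by simpa [Composition.eq_single_iff_length] using hb) _
    · simp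

theorem exists_fix (Φ : MSeries B → MSeries B)
    (hΦ : ∀ n a b, (∀ k < n, a k = b k) → Φ a n = Φ b n) (P : MSeries B → Prop) (Q : ∀ n, ((Fin n → B) → B) → Prop)
    (hP : ∀ f, P f ↔ ∀ n, Q n (f n)) (h0 : P fun _ _ => 0) :
    ∃ E, Φ E = E ∧ ((∀ f, P f → P (Φ f)) → P E) := by
  let e : ℕ → MSeries B := fun k => Φ^[k] (fun _ _ => 0)
  have es : ∀ k, e (k + 1) = Φ (e k) := fun k => Function.iterate_succ_apply' _ _ _
  have key : ∀ n k, n < k → e k n = e (n + 1) n := by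
    intro n
    induction n using Nat.strong_induction_on with
    | _ n ih =>
    intro k hk
    obtain ⟨k, rfl⟩ : ∃ j, k = j + 1 := ⟨k - 1, by omega⟩
    rw [es, es]
    apply hΦ
    intro j hj
    rw [ih j hj k (by omega), ih j hj n hj]
  refine ⟨fun n => e (n + 1) n, ?_, ?_⟩
  · funext n
    rw [es]
    apply hΦ
    intro j hj
    exact (key j n hj).symm
  · intro h
    have hk : ∀ k, P (e k) := by
      intro k
      induction k with
      | zero => exact h0
      | succ k ih => rw [es]; exact h _ ih
    refine (hP _).2 ?_
    intro n
    exact (hP _).1 (hk _) n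

/-- Remove the constant term. -/
def remZero (f : MSeries B) : MSeries B := fun n x => if n = 0 then 0 else f n x

/-- The map whose fixed points are solutions of `E · H(E) = 1`. -/
def invStep (H : MSeries B → MSeries B) (v : B) (E : MSeries B) : MSeries B :=
  fun n x => (oneS n x - (E.mul (remZero (H E))) n x) * v

theorem invStep_causal (H : MSeries B → MSeries B) (v : B)
    (hH : ∀ n a b, (∀ k < n, a k = b k) → H a n = H b n) :
    ∀ n a b, (∀ k < n, a k = b k) → invStep H v a n = invStep H v b n := by
  intro n a b h
  funext x
  unfold invStep
  congr 2
  unfold mul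
  refine Finset.sum_congr rfl fun k _ => ?_
  by_cases hk : k.1 = n
  · simp [remZero, hk]
  · have := k.2
    rw [h k.1 (by omega)]
    unfold remZero
    rw [hH (n - k.1) a b (fun j hj => h j (by omega))]

theorem invStep_fix (H : MSeries B → MSeries B) (v : B) (E : MSeries B) 
    (hv : v * ev (H E) [] = 1) (hE : invStep H v E = E) : E.mul (H E) = oneS := by
  apply ext_ev
  intro l
  have h1 : ∀ l, ev (E.mul (H E)) l = ev (E.mul (remZero (H E))) l + ev E l * ev (H E) [] := by
    intro l
    rw [ev_mul, ev_mul, cv_eq_sum, cv_eq_sum, Finset.sum_range_succ, Finset.sum_range_succ]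
    have h2 : ev (remZero (H E)) (l.drop l.length) = 0 := by simp [ev, remZero]
    rw [h2, mul_zero, add_zero, List.take_length, List.drop_length]
    congr 1
    refine Finset.sum_congr rfl fun k hk => ?_
    congr 1
    have := Finset.mem_range.1 hk
    unfold ev remZero
    rw [if_neg (by simp; omega)]
  have h3 : ev E l = (ev oneS l - ev (E.mul (remZero (H E))) l) * v := by
    conv_lhs => rw [← hE]
    rfl
  rw [h1, h3, mul_assoc, hv, mul_one, add_sub_cancel]

end helpers
end MSeries

namespace MSeries
section lin
variable {K B : Type u} [Field K] [Ring B] [Algebra K B]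

theorem isMult_iff (f : MSeries B) : IsMultSeries K f ↔ ∀ n,
    (∀ (x : Fin n → B) (i : Fin n) (a b : B), f n (Function.update x i (a + b)) =
      f n (Function.update x i a) + f n (Function.update x i b)) ∧
    (∀ (x : Fin n → B) (i : Fin n) (c : K) (a : B), f n (Function.update x i (c • a)) =
      c • f n (Function.update x i a)) := by
  constructor
  · intro h n
    obtain ⟨F, hF⟩ := h n
    constructor
    · intro x i a b
      rw [hF, hF, hF, F.map_update_add]
    · intro x i c a
      rw [hF, hF, F.map_update_smul]
  · intro h n
    exact ⟨MultilinearMap.mk' (f n) (h n).1 (h n).2, fun x => rfl⟩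

theorem isMult_zero : IsMultSeries K (fun _ _ => 0 : MSeries B) := by
  refine (isMult_iff _).2 ?_
  intro n; simp

theorem isMult_one : IsMultSeries K (oneS : MSeries B) := by
  rw [isMult_iff]; intro n
  cases n with
  | zero => exact ⟨fun x i => i.elim0, fun x i => i.elim0⟩
  | succ n => simp [oneS]

theorem isMult_remZero {f : MSeries B} (hf : IsMultSeries K f) : IsMultSeries K (remZero f) := by
  rw [isMult_iff] at hf ⊢
  intro n
  cases n with
  | zero => exact ⟨fun x i => i.elim0, fun x i => i.elim0⟩
  | succ n => simpa [remZero] using hf (n + 1)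

theorem isMult_mul {f g : MSeries B} (hf : IsMultSeries K f) (hg : IsMultSeries K g) :
    IsMultSeries K (f.mul g) := by
  rw [isMult_iff] at hf hg ⊢
  intro n
  have h1 : ∀ (k : Fin (n + 1)) (x : Fin n → B) (i : Fin n) (h : i.1 < k.1) (a : B),
      (fun j => Function.update x i a (Fin.castLE (Nat.lt_succ_iff.mp k.isLt) j)) =
      Function.update (fun j => x (Fin.castLE (Nat.lt_succ_iff.mp k.isLt) j)) ⟨i.1, h⟩ a := by
    intro k x i h a
    funext j
    simp only [Function.update_apply, Fin.ext_iff, Fin.val_castLE]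
  have h2 : ∀ (k : Fin (n + 1)) (x : Fin n → B) (i : Fin n) (h : ¬ i.1 < k.1) (a : B),
      (fun j => Function.update x i a (Fin.castLE (Nat.lt_succ_iff.mp k.isLt) j)) =
      (fun j => x (Fin.castLE (Nat.lt_succ_iff.mp k.isLt) j)) := by
    intro k x i h a
    funext j
    have := j.2
    simp only [Function.update_apply, Fin.ext_iff, Fin.val_castLE]
    rw [if_neg (by omega)]
  have h3 : ∀ (k : Fin (n + 1)) (x : Fin n → B) (i : Fin n) (h : i.1 < k.1) (a : B),
      (fun j : Fin (n - k.1) => Function.update x i a ⟨k.1 + j.1, by omega⟩) =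
      (fun j : Fin (n - k.1) => x ⟨k.1 + j.1, by omega⟩) := by
    intro k x i h a
    funext j
    simp only [Function.update_apply, Fin.ext_iff]
    rw [if_neg (by omega)]
  have h4 : ∀ (k : Fin (n + 1)) (x : Fin n → B) (i : Fin n) (h : ¬ i.1 < k.1) (a : B),
      (fun j : Fin (n - k.1) => Function.update x i a ⟨k.1 + j.1, by omega⟩) =
      Function.update (fun j : Fin (n - k.1) => x ⟨k.1 + j.1, by omega⟩)
        ⟨i.1 - k.1, by omega⟩ a := by
    intro k x i h a
    funext j
    simp only [Function.update_apply, Fin.ext_iff]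
    congr 1
    apply propext; omega
  constructor
  · intro x i a b
    unfold mul
    rw [← Finset.sum_add_distrib]
    refine Finset.sum_congr rfl fun k _ => ?_
    by_cases h : i.1 < k.1
    · simp only [h1 k x i h, h3 k x i h, (hf k.1).1, add_mul]
    · simp only [h2 k x i h, h4 k x i h, (hg (n - k.1)).1, mul_add]
  · intro x i c a
    unfold mul
    rw [Finset.smul_sum]
    refine Finset.sum_congr rfl fun k _ => ?_
    by_cases h : i.1 < k.1
    · simp only [h1 k x i h, h3 k x i h, (hf k.1).2, smul_mul_assoc]
    · simp only [h2 k x i h, h4 k x i h, (hg (n - k.1)).2, mul_smul_comm]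

theorem isMult_idS_mul {F : MSeries B} (hF : IsMultSeries K F) : IsMultSeries K (idS.mul F) := by
  refine isMult_mul ?_ hF
  rw [isMult_iff]
  intro n
  by_cases h : n = 1
  · subst h
    constructor
    · intro x i a b
      rw [Subsingleton.elim i 0]
      simp [idS]
    · intro x i a b
      rw [Subsingleton.elim i 0]
      simp [idS]
  · simp [idS_of_ne h]

theorem isMult_invStep {H : MSeries B → MSeries B} (v : B) {E : MSeries B}
    (hH : IsMultSeries K (H E)) (hE : IsMultSeries K E) : IsMultSeries K (invStep H v E) := by
  have h1 := isMult_mul hE (isMult_remZero hH)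
  have h2 := isMult_one (K := K) (B := B)
  rw [isMult_iff] at h1 h2 ⊢
  intro n
  constructor
  · intro x i a b
    unfold invStep
    rw [(h1 n).1, (h2 n).1]
    noncomm_ring
  · intro x i c a
    unfold invStep
    rw [(h1 n).2, (h2 n).2, ← smul_sub, smul_mul_assoc]

theorem app_update (p : MSeries B) {n : ℕ} (c : Composition n)
    (j : Fin n) (v : Fin n → B) (z : B) :
    (fun i => p (c.blocksFun i) (fun l => Function.update v j z (c.embedding i l))) =
      Function.update (fun i => p (c.blocksFun i) (fun l => v (c.embedding i l))) (c.index j)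
        (p (c.blocksFun (c.index j))
          (Function.update (v ∘ c.embedding (c.index j)) (c.invEmbedding j) z)) := by
  ext k
  by_cases h : k = c.index j
  · rw [h]
    let r : Fin (c.blocksFun (c.index j)) → Fin n := c.embedding (c.index j)
    simp only [Function.update_self]
    change p (c.blocksFun (c.index j)) (Function.update v j z ∘ r) = _
    let j' := c.invEmbedding j
    suffices B : Function.update v j z ∘ r = Function.update (v ∘ r) j' z by rw [B]
    suffices C : Function.update v (r j') z ∘ r = Function.update (v ∘ r) j' z by
      convert! C; exact (c.embedding_comp_inv j).symm
    exact Function.update_comp_eq_of_injective _ (c.embedding _).injective _ _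
  · simp only [h, Function.update_of_ne, Ne, not_false_iff]
    let r : Fin (c.blocksFun k) → Fin n := c.embedding k
    change p (c.blocksFun k) (Function.update v j z ∘ r) = p (c.blocksFun k) (v ∘ r)
    suffices B : Function.update v j z ∘ r = v ∘ r by rw [B]
    apply Function.update_comp_eq_of_notMem_range
    rwa [c.mem_range_embedding_iff']

theorem isMult_comp {f g : MSeries B} (hf : IsMultSeries K f) (hg : IsMultSeries K g) :
    IsMultSeries K (f.comp g) := by
  rw [isMult_iff] at hf hg ⊢
  intro n
  constructor
  · intro x i a b
    unfold comp
    simp only [app_update, (hg _).1, (hf _).1, Finset.sum_add_distrib]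
  · intro x i c a
    unfold comp
    simp only [app_update, (hg _).2, (hf _).2, Finset.smul_sum]

theorem comp_id' {p : MSeries B} (hp : IsMultSeries K p) : p.comp idS = p := by
  funext n v
  rw [comp, Finset.sum_eq_single (Composition.ones n)]
  · apply p.congr_arity (Composition.ones_length n)
    intro i hm hn
    rw [idS_of_eq (by simp)]
    refine congr_arg v ?_
    rw [Composition.ones_embedding]
  · intro b _ hb
    obtain ⟨k, hk, lt_k⟩ : ∃ (k : ℕ), k ∈ Composition.blocks b ∧ 1 < k :=
      Composition.ne_ones_iff.1 hb
    obtain ⟨i, hi⟩ : ∃ (i : Fin b.blocks.length), b.blocks[i] = k :=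
      List.get_of_mem hk
    let j : Fin b.length := ⟨i.val, b.blocks_length ▸ i.prop⟩
    have A : 1 < b.blocksFun j := by convert! lt_k
    obtain ⟨F, hF⟩ := hp b.length
    rw [hF]
    apply F.map_coord_zero j
    exact idS_of_ne (by omega) _
  · simp

open Composition in
theorem comp_assoc' {r : MSeries B} (hr : IsMultSeries K r) (q p : MSeries B) :
    (r.comp q).comp p = r.comp (q.comp p) := by
  funext n v
  let f : (Σ a : Composition n, Composition a.length) → B := fun c =>
    r c.2.length (fun i => q (c.2.blocksFun i) (fun j =>
      p (c.1.blocksFun (c.2.embedding i j)) fun k => v (c.1.embedding (c.2.embedding i j) k)))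
  let g : (Σ c : Composition n, ∀ i : Fin c.length, Composition (c.blocksFun i)) → B := fun c =>
    r c.1.length fun i : Fin c.1.length =>
      q (c.2 i).length (fun j => p ((c.2 i).blocksFun j) fun k =>
        v (c.1.embedding i ((c.2 i).embedding j k)))
  have hL : ((r.comp q).comp p) n v = ∑ c, f c := by
    rw [Fintype.sum_sigma]
    rfl
  have hR : (r.comp (q.comp p)) n v = ∑ c, g c := by
    rw [Fintype.sum_sigma]
    unfold comp
    refine Finset.sum_congr rfl fun c _ => ?_
    obtain ⟨F, hF⟩ := hr c.length
    simp only [hF, g]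
    rw [F.map_sum]
  rw [hL, hR]
  rw [← (sigmaEquivSigmaPi n).sum_comp]
  apply Finset.sum_congr rfl
  rintro ⟨a, b⟩ _
  apply r.congr_arity (Composition.length_gather a b).symm
  intro i hi1 hi2
  apply q.congr_arity (length_sigmaCompositionAux a b _).symm
  intro j hj1 hj2
  apply p.congr_arity (blocksFun_sigmaCompositionAux a b _ _).symm
  intro k hk1 hk2
  refine congr_arg v (Fin.ext ?_)
  change _ + k = _ + (_ + k)
  rw [← add_assoc]
  congr 1
  exact sizeUpTo_sizeUpTo_add _ _ hi1 hj1

theorem exists_GI {f : MSeries B} (hf : memGI K f) :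
    ∃ F : MSeries B, IsMultSeries K F ∧ IsUnit (F 0 fun i => i.elim0) ∧ f = idS.mul F := by
  obtain ⟨hm, h0, _, hu, hx⟩ := hf
  refine ⟨shift f 1, ?_, ?_, ?_⟩
  · rw [isMult_iff] at hm ⊢
    intro n
    unfold shift
    constructor
    · intro x i a b
      simp only [Fin.cons_update, (hm (n + 1)).1]
    · intro x i c a
      simp only [Fin.cons_update, (hm (n + 1)).2]
  · convert hu using 1
    refine congr_arity f rfl ?_
    intro i h1 h2
    have : i = 0 := by omega
    subst this
    rfl
  · funext n x
    cases n with
    | zero => rw [idS_mul_zero, h0]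
    | succ n =>
      rw [idS_mul_succ, hx]
      congr 1
      unfold shift
      congr 1
      funext i
      refine Fin.cases ?_ ?_ i
      · simp
      · intro j; simp [Fin.tail]

theorem memGI_idS_mul {F : MSeries B} (hF : IsMultSeries K F)
    (hu : IsUnit (F 0 fun i => i.elim0)) : memGI K (idS.mul F) := by
  have h1 : ∀ b : B, (idS.mul F) 1 (fun _ => b) = b * F 0 fun i => i.elim0 := by
    intro b
    rw [idS_mul_succ]
    congr 2
    funext i
    exact i.elim0
  refine ⟨isMult_idS_mul hF, idS_mul_zero F, ?_, ?_, ?_⟩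
  · simp only [h1]
    obtain ⟨u, hu⟩ := hu
    rw [← hu]
    exact u.mulRight_bijective
  · rw [h1, one_mul]; exact hu
  · intro n x
    rw [idS_mul_succ, idS_mul_succ]
    simp

theorem GI_comp (F G : MSeries B) :
    (idS.mul F).comp (idS.mul G) = idS.mul (G.mul (F.comp (idS.mul G))) := by
  rw [mul_comp, id_comp' _ (idS_mul_zero G), mul_assoc']

theorem comp_causal (F : MSeries B) (n : ℕ) (a b : MSeries B) (h : ∀ k < n, a k = b k) :
    F.comp (idS.mul a) n = F.comp (idS.mul b) n := by
  funext x
  unfold comp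
  refine Finset.sum_congr rfl fun c _ => ?_
  congr 1
  funext i
  have h1 := c.blocksFun_le i
  generalize (fun j => x (c.embedding i j)) = y
  revert y h1
  generalize c.blocksFun i = m
  intro h1 y
  cases m with
  | zero => rw [idS_mul_zero, idS_mul_zero]
  | succ m => rw [idS_mul_succ, idS_mul_succ, h m (by omega)]

theorem exists_inv (K : Type u) [Field K] [Algebra K B] (H : MSeries B → MSeries B) (u : Bˣ)
    (hu : ∀ E, ev (H E) [] = u)
    (hH : ∀ n a b, (∀ k < n, a k = b k) → H a n = H b n) :
    ∃ E : MSeries B, E.mul (H E) = oneS ∧ ev E [] = (u⁻¹ : Bˣ) ∧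
      ((∀ f, IsMultSeries K f → IsMultSeries K (H f)) → IsMultSeries K E) := by
  obtain ⟨E, hE, hm⟩ := exists_fix (invStep H ((u⁻¹ : Bˣ) : B)) (invStep_causal H _ hH)
    (IsMultSeries K) (fun n f => ∃ F : MultilinearMap K (fun _ : Fin n => B) B, ∀ x, f x = F x)
    (fun f => Iff.rfl) isMult_zero
  have h1 := invStep_fix H ((u⁻¹ : Bˣ) : B) E (by rw [hu]; simp) hE
  refine ⟨E, h1, ?_, fun h => hm fun f hf => isMult_invStep _ (h f hf) hf⟩
  have h2 : ev (E.mul (H E)) [] = 1 := by rw [h1, ev_oneS_nil]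
  rw [ev_mul, cv, hu] at h2
  exact Units.eq_inv_of_mul_eq_one_right h2

theorem exists_right_inv {f : MSeries B} (hf : memGI K f) :
    ∃ h : MSeries B, memGI K h ∧ f.comp h = idS := by
  obtain ⟨F, hF, ⟨u, hu⟩, rfl⟩ := exists_GI hf
  obtain ⟨E, h1, h2, h3⟩ := exists_inv K (fun E => F.comp (idS.mul E)) u
    (fun E => by rw [ev_comp_nil, hu]; exact ev_nil F _) (comp_causal F)
  refine ⟨idS.mul E, memGI_idS_mul (h3 fun g hg => isMult_comp hF (isMult_idS_mul hg)) ?_, ?_⟩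
  · rw [← ev_nil E, h2]; exact Units.isUnit _
  · rw [GI_comp]
    rw [h1, mul_one']

theorem exists_mul_inv (K : Type u) [Field K] [Algebra K B] (G : MSeries B)
    (hG : IsUnit (ev G [])) : ∃ E : MSeries B, E.mul G = oneS ∧ G.mul E = oneS := by
  obtain ⟨u, hu⟩ := hG
  obtain ⟨E, h1, h2, _⟩ := exists_inv K (fun _ => G) u (fun _ => hu.symm) (fun _ _ _ _ => rfl)
  obtain ⟨E', h1', _, _⟩ := exists_inv K (fun _ => E) u⁻¹ (fun _ => h2) (fun _ _ _ _ => rfl)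
  have : E' = G := by rw [← mul_one' E', ← h1, ← mul_assoc', h1', one_mul']
  exact ⟨E, h1, this ▸ h1'⟩

end lin
end MSeries

open MSeries in
/-- `G_B^I` is a group under composition; in particular `(I·F) ∘ (I·G) = I·(G·(F∘(I·G)))`
and the compositional inverse of `f = I·F` is `f^{∘-1} = I·(F ∘ f^{∘-1})⁻¹`. -/
theorem GI_group {K B : Type u} [Field K] [CharZero K] [Ring B] [Algebra K B] :
    memGI K (idS : MSeries B) ∧
    (∀ f g : MSeries B, memGI K f → memGI K g → memGI K (f.comp g)) ∧
    (∀ f : MSeries B, memGI K f →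
      ∃ h : MSeries B, memGI K h ∧ f.comp h = idS ∧ h.comp f = idS) ∧
    (∀ F G : MSeries B, IsMultSeries K F → IsMultSeries K G →
      IsUnit (F 0 fun i => i.elim0) → IsUnit (G 0 fun i => i.elim0) →
      (idS.mul F).comp (idS.mul G) = idS.mul (G.mul (F.comp (idS.mul G)))) ∧
    (∀ F h : MSeries B, IsMultSeries K F → IsUnit (F 0 fun i => i.elim0) →
      (idS.mul F).comp h = idS → h.comp (idS.mul F) = idS →
      ∃ E : MSeries B, E.mul (F.comp h) = oneS ∧ (F.comp h).mul E = oneS ∧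
        h = idS.mul E) := by
  refine ⟨?_, ?_, ?_, ?_, ?_⟩
  · rw [← mul_one' (idS : MSeries B)]
    exact memGI_idS_mul isMult_one (by simp [oneS])
  · intro f g hf hg
    obtain ⟨F, hF, hFu, rfl⟩ := exists_GI hf
    obtain ⟨G, hG, hGu, rfl⟩ := exists_GI hg
    rw [GI_comp]
    refine memGI_idS_mul (isMult_mul hG (isMult_comp hF (isMult_idS_mul hG))) ?_
    rw [← ev_nil (G.mul _), ev_mul, cv, ev_comp_nil]
    rw [← ev_nil F] at hFu
    rw [← ev_nil G] at hGu
    exact hGu.mul hFu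
  · intro f hf
    obtain ⟨h, hh, h1⟩ := exists_right_inv hf
    obtain ⟨k, hk, h2⟩ := exists_right_inv hh
    refine ⟨h, hh, h1, ?_⟩
    have : f = k := by
      rw [← comp_id' hf.1, ← h2, ← comp_assoc' hf.1, h1, id_comp' k hk.2.1]
    rw [this, h2]
  · intro F G _ _ _ _
    exact GI_comp F G
  · intro F h _ hu h1 h2
    have h0 : ∀ x, h 0 x = 0 := by
      intro x
      rw [← ev_nil h, ← ev_comp_nil h (idS.mul F), h2]
      exact idS_of_ne (by simp) _
    obtain ⟨E, hE1, hE2⟩ := exists_mul_inv K (F.comp h) (by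
      rw [ev_comp_nil, ev_nil F (fun i => i.elim0)]; exact hu)
    refine ⟨E, hE1, hE2, ?_⟩
    rw [mul_comp, id_comp' h h0] at h1
    rw [← h1, mul_assoc', hE2, mul_one']
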